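/- arXiv:2408.03530 — 2 statements merged into one kernel-verified Lean document; each statement's English description precedes it below -/
import Mathlib

section
/- Assume RA and ER. Then for every Borel set A ⊆ ℝ: P(T=a) ≤ P(Y∈A, D=1 | Z=1) + P(Y∈ℝ∖A, D=1 | Z=0), and P(T=n) ≤ P(Y∈A, D=0 | Z=1) + P(Y∈ℝ∖A, D=0 | Z=0). -/
/-!
By the exclusion restriction, the outcome of a unit whose treatment is `d` under both instrument
values does not depend on the instrument, so it lies either in `A` or in its complement. In the
first case the unit is seen with `Y ∈ A`, `D = d` once it is assigned `Z = 1`; in the second it is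
seen with `Y ∉ A`, `D = d` once it is assigned `Z = 0`. Random assignment turns the probabilities of
these two potential events into the two observed conditional probabilities, and the union bound
gives the inequality.
-/

open MeasureTheory ProbabilityTheory

/-- Conditional probability `P(s | t)` as a real number. -/
noncomputable def pr {Ω : Type*} [MeasurableSpace Ω] (P : Measure Ω) (t s : Set Ω) : ℝ :=
  ((P[|t]) s).toReal

/-- Conditional expectation `E[f | t]` as a real number. -/
noncomputable def ce {Ω : Type*} [MeasurableSpace Ω] (P : Measure Ω) (t : Set Ω) (f : Ω → ℝ) : ℝ :=
  ∫ ω, f ω ∂(P[|t])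

/-- Always-takers. -/
def typeA {Ω : Type*} (D0 D1 : Ω → ℝ) : Set Ω := {ω | D0 ω = 1 ∧ D1 ω = 1}
/-- Never-takers. -/
def typeN {Ω : Type*} (D0 D1 : Ω → ℝ) : Set Ω := {ω | D0 ω = 0 ∧ D1 ω = 0}
/-- Compliers. -/
def typeC {Ω : Type*} (D0 D1 : Ω → ℝ) : Set Ω := {ω | D0 ω = 0 ∧ D1 ω = 1}
/-- Defiers. -/
def typeDF {Ω : Type*} (D0 D1 : Ω → ℝ) : Set Ω := {ω | D0 ω = 1 ∧ D1 ω = 0}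

lemma measure_ne_zero_of_union_eq_univ {Ω : Type*} [MeasurableSpace Ω] {μ : Measure Ω}
    {s t : Set Ω} (hst : s ∪ t = Set.univ) (hs : μ s < μ Set.univ) : μ t ≠ 0 := by
  intro ht
  refine hs.not_ge ?_
  calc μ Set.univ = μ (s ∪ t) := by rw [hst]
    _ ≤ μ s + μ t := measure_union_le s t
    _ = μ s := by rw [ht, add_zero]

section Identification

variable {Ω α β 𝓩 𝓓 𝓨 : Type*} [MeasurableSpace Ω] [MeasurableSpace α] [MeasurableSpace β]
  [MeasurableSpace 𝓩] [MeasurableSingletonClass 𝓩] [MeasurableSpace 𝓓] [MeasurableSingletonClass 𝓓]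
  [MeasurableSpace 𝓨] {P : Measure Ω} [IsFiniteMeasure P]

lemma cond_preimage_of_indepFun {W : Ω → α} {X : Ω → β} (hWX : IndepFun W X P)
    (hX : Measurable X) {s : Set α} (hs : MeasurableSet s) {t : Set β} (ht : MeasurableSet t)
    (hPt : P (X ⁻¹' t) ≠ 0) :
    P[W ⁻¹' s | X ⁻¹' t] = P (W ⁻¹' s) := by
  rw [cond_apply (hX ht), Set.inter_comm, hWX.measure_inter_preimage_eq_mul s t hs ht,
    mul_comm (P (W ⁻¹' s)), ENNReal.inv_mul_cancel_left hPt (measure_ne_top _ _)]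

lemma pr_observed_eq_measureReal_potential {Yp : 𝓓 → 𝓩 → Ω → 𝓨} {Dp : 𝓩 → Ω → 𝓓} {Z : Ω → 𝓩}
    {D : Ω → 𝓓} {Y : Ω → 𝓨} (hZ : Measurable Z) (hD : ∀ ω, D ω = Dp (Z ω) ω)
    (hY : ∀ ω, Y ω = Yp (D ω) (Z ω) ω) {d : 𝓓} {z : 𝓩} (hz : P {ω | Z ω = z} ≠ 0)
    (hRA : IndepFun (fun ω ↦ (Yp d z ω, Dp z ω)) Z P) {A : Set 𝓨} (hA : MeasurableSet A) :
    pr P {ω | Z ω = z} {ω | Y ω ∈ A ∧ D ω = d} = P.real {ω | Yp d z ω ∈ A ∧ Dp z ω = d} := by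
  have hZz : MeasurableSet {ω | Z ω = z} := hZ (measurableSet_singleton z)
  have consistency : {ω | Z ω = z} ∩ {ω | Y ω ∈ A ∧ D ω = d} =
      {ω | Z ω = z} ∩ {ω | Yp d z ω ∈ A ∧ Dp z ω = d} := by
    ext ω
    refine and_congr_right fun (hω : Z ω = z) ↦ ?_
    change Y ω ∈ A ∧ D ω = d ↔ Yp d z ω ∈ A ∧ Dp z ω = d
    rw [hY, hD, hω]
    exact and_congr_left fun hDd ↦ by rw [hDd]
  have independence : P[{ω | Yp d z ω ∈ A ∧ Dp z ω = d} | {ω | Z ω = z}] =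
      P {ω | Yp d z ω ∈ A ∧ Dp z ω = d} :=
    cond_preimage_of_indepFun hRA hZ (hA.prod (measurableSet_singleton d))
      (measurableSet_singleton z) hz
  rw [pr, ← cond_inter_self hZz, consistency, cond_inter_self hZz, independence, Measure.real]

theorem always_never_taker_probability_bounds_general {Yp : 𝓓 → 𝓩 → Ω → 𝓨} {Dp : 𝓩 → Ω → 𝓓}
    {Z : Ω → 𝓩} {D : Ω → 𝓓} {Y : Ω → 𝓨} (hZ : Measurable Z) (hD : ∀ ω, D ω = Dp (Z ω) ω)
    (hY : ∀ ω, Y ω = Yp (D ω) (Z ω) ω) {d : 𝓓} {z₀ z₁ : 𝓩} (hz₀ : P {ω | Z ω = z₀} ≠ 0)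
    (hz₁ : P {ω | Z ω = z₁} ≠ 0) (hRA₀ : IndepFun (fun ω ↦ (Yp d z₀ ω, Dp z₀ ω)) Z P)
    (hRA₁ : IndepFun (fun ω ↦ (Yp d z₁ ω, Dp z₁ ω)) Z P)
    (hER : ∀ᵐ ω ∂P, Dp z₀ ω = d → Dp z₁ ω = d → Yp d z₁ ω = Yp d z₀ ω)
    {A : Set 𝓨} (hA : MeasurableSet A) :
    P.real {ω | Dp z₀ ω = d ∧ Dp z₁ ω = d} ≤
      pr P {ω | Z ω = z₁} {ω | Y ω ∈ A ∧ D ω = d} +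
        pr P {ω | Z ω = z₀} {ω | Y ω ∉ A ∧ D ω = d} := by
  have covered : {ω | Dp z₀ ω = d ∧ Dp z₁ ω = d} ≤ᵐ[P]
      ({ω | Yp d z₁ ω ∈ A ∧ Dp z₁ ω = d} ∪ {ω | Yp d z₀ ω ∈ Aᶜ ∧ Dp z₀ ω = d} : Set Ω) := by
    filter_upwards [hER] with ω hω ⟨h₀, h₁⟩
    by_cases hyA : Yp d z₁ ω ∈ A
    · exact Or.inl ⟨hyA, h₁⟩
    · exact Or.inr ⟨hω h₀ h₁ ▸ hyA, h₀⟩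
  calc P.real {ω | Dp z₀ ω = d ∧ Dp z₁ ω = d}
      ≤ P.real ({ω | Yp d z₁ ω ∈ A ∧ Dp z₁ ω = d} ∪ {ω | Yp d z₀ ω ∈ Aᶜ ∧ Dp z₀ ω = d}) :=
        ENNReal.toReal_mono (measure_ne_top _ _) (measure_mono_ae covered)
    _ ≤ P.real {ω | Yp d z₁ ω ∈ A ∧ Dp z₁ ω = d} + P.real {ω | Yp d z₀ ω ∈ Aᶜ ∧ Dp z₀ ω = d} :=
        measureReal_union_le _ _
    _ = pr P {ω | Z ω = z₁} {ω | Y ω ∈ A ∧ D ω = d} +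
          pr P {ω | Z ω = z₀} {ω | Y ω ∈ Aᶜ ∧ D ω = d} := by
        rw [pr_observed_eq_measureReal_potential hZ hD hY hz₁ hRA₁ hA,
          pr_observed_eq_measureReal_potential hZ hD hY hz₀ hRA₀ hA.compl]

end Identification

section BinaryCoding

variable {Ω : Type*}

/-- The potential treatment `D_z`. A binary instrument is coded by real numbers, so `z` ranges over
`ℝ` and `D_0`, `D_1` are interpolated linearly. -/
def potentialTreatment (D0 D1 : Ω → ℝ) (z : ℝ) (ω : Ω) : ℝ :=
  D1 ω * z + D0 ω * (1 - z)

/-- The potential outcome `Y_{dz}` under treatment `d` and instrument value `z`. Both indices range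
over `ℝ`, by linear interpolation between the values `0` and `1`. -/
def potentialOutcome (Y11 Y10 Y01 Y00 : Ω → ℝ) (d z : ℝ) (ω : Ω) : ℝ :=
  (Y11 ω * z + Y10 ω * (1 - z)) * d + (Y01 ω * z + Y00 ω * (1 - z)) * (1 - d)

variable [MeasurableSpace Ω] {P : Measure Ω}

lemma indepFun_potentialOutcome_potentialTreatment {β : Type*} [MeasurableSpace β]
    {Y11 Y10 Y01 Y00 D0 D1 : Ω → ℝ} {Z : Ω → β}
    (hRA : IndepFun (fun ω ↦ (Y11 ω, Y10 ω, Y01 ω, Y00 ω, D0 ω, D1 ω)) Z P) (d z : ℝ) :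
    IndepFun (fun ω ↦ (potentialOutcome Y11 Y10 Y01 Y00 d z ω, potentialTreatment D0 D1 z ω))
      Z P :=
  hRA.comp (φ := fun w : ℝ × ℝ × ℝ × ℝ × ℝ × ℝ ↦
    ((w.1 * z + w.2.1 * (1 - z)) * d + (w.2.2.1 * z + w.2.2.2.1 * (1 - z)) * (1 - d),
      w.2.2.2.2.2 * z + w.2.2.2.2.1 * (1 - z))) (by fun_prop) measurable_id

end BinaryCoding

theorem always_never_taker_probability_bounds
    {Ω : Type*} [MeasurableSpace Ω] (P : Measure Ω) [IsProbabilityMeasure P]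
    (Y11 Y10 Y01 Y00 D0 D1 Z D Y : Ω → ℝ)
    (hY11m : Measurable Y11) (hY10m : Measurable Y10)
    (hY01m : Measurable Y01) (hY00m : Measurable Y00)
    (hD0m : Measurable D0) (hD1m : Measurable D1) (hZm : Measurable Z)
    (hD0b : ∀ ω, D0 ω = 0 ∨ D0 ω = 1) (hD1b : ∀ ω, D1 ω = 0 ∨ D1 ω = 1)
    (hZb : ∀ ω, Z ω = 0 ∨ Z ω = 1)
    (hZpos : 0 < P {ω | Z ω = 1}) (hZlt : P {ω | Z ω = 1} < 1)
    (hDdef : ∀ ω, D ω = D1 ω * Z ω + D0 ω * (1 - Z ω))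
    (hYdef : ∀ ω, Y ω = (Y11 ω * Z ω + Y10 ω * (1 - Z ω)) * D ω
        + (Y01 ω * Z ω + Y00 ω * (1 - Z ω)) * (1 - D ω))
    (RA : IndepFun (fun ω => (Y11 ω, Y10 ω, Y01 ω, Y00 ω, D0 ω, D1 ω)) Z P)
    (ER1 : ∀ᵐ ω ∂P, Y11 ω = Y10 ω) (ER0 : ∀ᵐ ω ∂P, Y01 ω = Y00 ω)
    (A : Set ℝ) (hA : MeasurableSet A) :
    (P (typeA D0 D1)).toReal
      ≤ pr P {ω | Z ω = 1} {ω | Y ω ∈ A ∧ D ω = 1}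
        + pr P {ω | Z ω = 0} {ω | Y ω ∉ A ∧ D ω = 1}
  ∧ (P (typeN D0 D1)).toReal
      ≤ pr P {ω | Z ω = 1} {ω | Y ω ∈ A ∧ D ω = 0}
        + pr P {ω | Z ω = 0} {ω | Y ω ∉ A ∧ D ω = 0} := by
  have hZzero : P {ω | Z ω = 0} ≠ 0 :=
    measure_ne_zero_of_union_eq_univ (Set.eq_univ_of_forall fun ω ↦ (hZb ω).symm) (by simpa)
  have bound (d : ℝ) := always_never_taker_probability_bounds_general
    (Yp := potentialOutcome Y11 Y10 Y01 Y00) (Dp := potentialTreatment D0 D1) (d := d)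
    hZm hDdef hYdef hZzero hZpos.ne' (indepFun_potentialOutcome_potentialTreatment RA d 0)
    (indepFun_potentialOutcome_potentialTreatment RA d 1)
  constructor
  · simpa [typeA, potentialTreatment, Measure.real] using
      bound 1 (ER1.mono fun ω hω _ _ ↦ by simpa [potentialOutcome]) hA
  · simpa [typeN, potentialTreatment, Measure.real] using
      bound 0 (ER0.mono fun ω hω _ _ ↦ by simpa [potentialOutcome]) hA
end

section
/- Assume RA and MON (D₁ ≥ D₀ almost surely), and P(D=1 | Z=1) > P(D=1 | Z=0). Then p_df = 0, p_c = P(D=1 | Z=1) − P(D=1 | Z=0) > 0, p_a = P(D=1 | Z=0), p_n = P(D=0 | Z=1). Moreover: (i) if p_a > 0, then for every y ∈ ℝ, max{ (P(Y≤y, D=1 | Z=1) − p_c)/p_a, 0 } ≤ P(Y₁₁≤y | T=a) ≤ min{ P(Y≤y, D=1 | Z=1)/p_a, 1 }, P(Y₁₀≤y | T=a) = P(Y≤y | D=1, Z=0), and P(Y₁₁≤y | T=c) = (P(Y≤y, D=1 | Z=1) − p_a·P(Y₁₁≤y | T=a))/p_c; (ii) if p_n > 0, then for every y ∈ ℝ,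 max{ (P(Y≤y, D=0 | Z=0) − p_c)/p_n, 0 } ≤ P(Y₀₀≤y | T=n) ≤ min{ P(Y≤y, D=0 | Z=0)/p_n, 1 }, P(Y₀₁≤y | T=n) = P(Y≤y | D=0, Z=1), and P(Y₀₀≤y | T=c) = (P(Y≤y, D=0 | Z=0) − p_n·P(Y₀₀≤y | T=n))/p_c. -/
open MeasureTheory ProbabilityTheory

/-!
By random assignment, the law of the observed pair `(D, Y)` in an arm of the instrument is the law
of the potential pair of that arm. Monotonicity removes the defiers, so in one arm the units taking
treatment `d` form a single type (the always-takers for `d = 1`, the never-takers for `d = 0`),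
which reveals that type's share and outcome law, while in the other arm they are a mixture of the
same type and the compliers. The bounds are those on one component of a mixture when only the
mixture and its weights are known, with the other component ranging between mass `0` and its weight.
-/

section ConditionalProbability

variable {Ω : Type*} [MeasurableSpace Ω] {P : Measure Ω} {s s' t t' : Set Ω}

theorem pr_eq_div (ht : MeasurableSet t) : pr P t s = P.real (t ∩ s) / P.real t := by
  simp only [pr, Measure.real, cond_apply ht, ENNReal.toReal_mul, ENNReal.toReal_inv]
  exact inv_mul_eq_div _ _

theorem pr_congr_left (h : t =ᵐ[P] t') : pr P t s = pr P t' s := by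
  simp only [pr, ProbabilityTheory.cond, measure_congr h, Measure.restrict_congr_set h]

theorem pr_congr_right (ht : MeasurableSet t) (h : ∀ ω ∈ t, ω ∈ s ↔ ω ∈ s') :
    pr P t s = pr P t s' := by
  have hinter : t ∩ s = t ∩ s' := Set.ext fun ω ↦ and_congr_right (h ω)
  rw [pr_eq_div ht, pr_eq_div ht, hinter]

theorem pr_inter_eq_div [IsFiniteMeasure P] (ht : MeasurableSet t) (ht' : MeasurableSet t') :
    pr P (t ∩ t') s = pr P t (t' ∩ s) / pr P t t' := by
  rw [pr, ← cond_cond_eq_cond_inter ht ht']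
  exact pr_eq_div ht'

theorem pr_preimage_of_indepFun [IsFiniteMeasure P] {𝓦 ι : Type*} [MeasurableSpace 𝓦]
    [MeasurableSpace ι] {W : Ω → 𝓦} {Z : Ω → ι} {Q : Set 𝓦} {B : Set ι} (hWZ : IndepFun W Z P)
    (hZ : Measurable Z) (hQ : MeasurableSet Q) (hB : MeasurableSet B) (hpos : P (Z ⁻¹' B) ≠ 0) :
    pr P (Z ⁻¹' B) (W ⁻¹' Q) = P.real (W ⁻¹' Q) := by
  have hindep : P.real (Z ⁻¹' B ∩ W ⁻¹' Q) = P.real (Z ⁻¹' B) * P.real (W ⁻¹' Q) := by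
    simp only [Measure.real, hWZ.symm.measure_inter_preimage_eq_mul B Q hB hQ, ENNReal.toReal_mul]
  have hpos' : P.real (Z ⁻¹' B) ≠ 0 := by rwa [measureReal_ne_zero_iff]
  rw [pr_eq_div (hZ hB), hindep, mul_div_cancel_left₀ _ hpos']

end ConditionalProbability

section Mixture

variable {Ω : Type*} [MeasurableSpace Ω] {P : Measure Ω} [IsFiniteMeasure P] {A C S : Set Ω}

theorem max_le_pr_of_union (hA : MeasurableSet A) :
    max ((P.real ((A ∪ C) ∩ S) - P.real C) / P.real A) 0 ≤ pr P A S := by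
  have hle : P.real ((A ∪ C) ∩ S) ≤ P.real (A ∩ S) + P.real C := calc
    P.real ((A ∪ C) ∩ S) ≤ P.real (A ∩ S ∪ C) := measureReal_mono (by grind)
    _ ≤ P.real (A ∩ S) + P.real C := measureReal_union_le _ _
  rw [pr_eq_div hA]
  refine max_le ?_ (by positivity)
  gcongr
  linarith

theorem pr_le_min_of_union (hA : MeasurableSet A) :
    pr P A S ≤ min (P.real ((A ∪ C) ∩ S) / P.real A) 1 := by
  rw [pr_eq_div hA]
  refine le_min ?_ (div_le_one_of_le₀ (measureReal_mono Set.inter_subset_left) measureReal_nonneg)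
  gcongr
  · finiteness
  · exact Set.subset_union_left

theorem pr_right_of_disjoint_union (hA : MeasurableSet A) (hC : MeasurableSet C)
    (hAC : Disjoint A C) :
    pr P C S = (P.real ((A ∪ C) ∩ S) - P.real A * pr P A S) / P.real C := by
  have hmul : P.real A * pr P A S = P.real (A ∩ S) := by
    simp only [pr, Measure.real, ← cond_mul_eq_inter hA, ENNReal.toReal_mul, mul_comm]
  have hunion : P.real ((A ∪ C) ∩ S) = P.real (A ∩ S) + P.real (C ∩ S) := by
    rw [← measureReal_restrict_apply (hA.union hC), ← measureReal_restrict_apply hA,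
      ← measureReal_restrict_apply hC, measureReal_union hAC hC]
  rw [pr_eq_div hC, hmul, hunion, add_sub_cancel_left]

end Mixture

/-- The potential treatment `E` and the potential outcome `V` are what one observes in the cell
`Z = z`, `D = d`, and the instrument is randomized relative to them: `E` is the treatment taken in
the arm `Z = z`, and `V` the outcome of those who take `d` there. Only the pair `(E, V)`, not the
full vector of potential variables, is required to be independent of `Z`. -/
structure IsRandomizedCell {Ω ι κ 𝓨 : Type*} [MeasurableSpace Ω] [MeasurableSpace ι]
    [MeasurableSpace κ] [MeasurableSpace 𝓨] (P : Measure Ω) (Z : Ω → ι) (D : Ω → κ) (Y : Ω → 𝓨)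
    (z : ι) (d : κ) (E : Ω → κ) (V : Ω → 𝓨) : Prop where
  indepFun : IndepFun (fun ω ↦ (E ω, V ω)) Z P
  treatment_eq : ∀ ω, Z ω = z → D ω = E ω
  outcome_eq : ∀ ω, Z ω = z → D ω = d → Y ω = V ω

namespace IsRandomizedCell

variable {Ω ι κ 𝓨 : Type*} [MeasurableSpace Ω] [MeasurableSpace ι] [MeasurableSingletonClass ι]
  [MeasurableSpace κ] [MeasurableSingletonClass κ] [MeasurableSpace 𝓨] {P : Measure Ω}
  [IsFiniteMeasure P] {Z : Ω → ι} {D E E' : Ω → κ} {Y V V' : Ω → 𝓨} {z z' : ι} {d : κ} {B : Set 𝓨}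

theorem pr_outcome_treatment (h : IsRandomizedCell P Z D Y z d E V) (hZ : Measurable Z)
    (hz : P {ω | Z ω = z} ≠ 0) (hB : MeasurableSet B) :
    pr P {ω | Z ω = z} {ω | Y ω ∈ B ∧ D ω = d} = P.real ({ω | E ω = d} ∩ {ω | V ω ∈ B}) := by
  have hpair : {ω | E ω = d} ∩ {ω | V ω ∈ B} = (fun ω ↦ (E ω, V ω)) ⁻¹' {d} ×ˢ B := rfl
  have hcell : ∀ ω ∈ {ω | Z ω = z},
      (ω ∈ {ω | Y ω ∈ B ∧ D ω = d} ↔ ω ∈ {ω | E ω = d} ∩ {ω | V ω ∈ B}) := by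
    intro ω hω
    have hD := h.treatment_eq ω hω
    have hY := h.outcome_eq ω hω
    grind
  have hZz : MeasurableSet {ω | Z ω = z} := hZ (measurableSet_singleton z)
  have harm : {ω | Z ω = z} = Z ⁻¹' {z} := rfl
  rw [pr_congr_right hZz hcell, hpair, harm,
    pr_preimage_of_indepFun h.indepFun hZ ((measurableSet_singleton d).prod hB)
      (measurableSet_singleton z) hz]

theorem pr_treatment (h : IsRandomizedCell P Z D Y z d E V) (hZ : Measurable Z)
    (hz : P {ω | Z ω = z} ≠ 0) :
    pr P {ω | Z ω = z} {ω | D ω = d} = P.real {ω | E ω = d} := by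
  simpa using h.pr_outcome_treatment hZ hz MeasurableSet.univ

theorem pr_outcome (h : IsRandomizedCell P Z D Y z d E V) (hZ : Measurable Z) (hE : Measurable E)
    (hz : P {ω | Z ω = z} ≠ 0) (hB : MeasurableSet B) :
    pr P {ω | D ω = d ∧ Z ω = z} {ω | Y ω ∈ B} = pr P {ω | E ω = d} {ω | V ω ∈ B} := by
  have hZz : MeasurableSet {ω | Z ω = z} := hZ (measurableSet_singleton z)
  have hEd : MeasurableSet {ω | E ω = d} := hE (measurableSet_singleton d)
  have hcell : {ω | D ω = d ∧ Z ω = z} = {ω | Z ω = z} ∩ {ω | E ω = d} := by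
    ext ω
    grind [h.treatment_eq ω]
  calc
    pr P {ω | D ω = d ∧ Z ω = z} {ω | Y ω ∈ B}
      = pr P {ω | Z ω = z} ({ω | E ω = d} ∩ {ω | Y ω ∈ B}) / pr P {ω | Z ω = z} {ω | E ω = d} := by
        rw [hcell, pr_inter_eq_div hZz hEd]
    _ = pr P {ω | Z ω = z} {ω | Y ω ∈ B ∧ D ω = d} / pr P {ω | Z ω = z} {ω | D ω = d} := by
        congr 1 <;> exact pr_congr_right hZz fun ω hω ↦ by grind [h.treatment_eq ω hω]
    _ = pr P {ω | E ω = d} {ω | V ω ∈ B} := by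
        rw [h.pr_outcome_treatment hZ hz hB, h.pr_treatment hZ hz, pr_eq_div hEd]

theorem pr_treatment_of_ae_eq {A : Set Ω} (h : IsRandomizedCell P Z D Y z d E V)
    (hZ : Measurable Z) (hz : P {ω | Z ω = z} ≠ 0) (hEd : {ω | E ω = d} =ᵐ[P] A) :
    pr P {ω | Z ω = z} {ω | D ω = d} = P.real A :=
  (h.pr_treatment hZ hz).trans (measureReal_congr hEd)

theorem measureReal_eq_pr_treatment_sub {A C : Set Ω} (h : IsRandomizedCell P Z D Y z d E V)
    (h' : IsRandomizedCell P Z D Y z' d E' V') (hZ : Measurable Z)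
    (hz : P {ω | Z ω = z} ≠ 0) (hz' : P {ω | Z ω = z'} ≠ 0) (hC : MeasurableSet C)
    (hAC : Disjoint A C) (hEd : {ω | E ω = d} = A ∪ C) (hEd' : {ω | E' ω = d} =ᵐ[P] A) :
    P.real C = pr P {ω | Z ω = z} {ω | D ω = d} - pr P {ω | Z ω = z'} {ω | D ω = d} := by
  rw [h.pr_treatment hZ hz, hEd, measureReal_union hAC hC, h'.pr_treatment_of_ae_eq hZ hz' hEd',
    add_sub_cancel_left]

theorem stratum_bounds {A C : Set Ω} (h : IsRandomizedCell P Z D Y z d E V)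
    (h' : IsRandomizedCell P Z D Y z' d E' V') (hZ : Measurable Z) (hE' : Measurable E')
    (hz : P {ω | Z ω = z} ≠ 0) (hz' : P {ω | Z ω = z'} ≠ 0) (hA : MeasurableSet A)
    (hC : MeasurableSet C) (hAC : Disjoint A C) (hEd : {ω | E ω = d} = A ∪ C)
    (hEd' : {ω | E' ω = d} =ᵐ[P] A) (hB : MeasurableSet B) :
    max ((pr P {ω | Z ω = z} {ω | Y ω ∈ B ∧ D ω = d} - P.real C) / P.real A) 0
        ≤ pr P A {ω | V ω ∈ B}
      ∧ pr P A {ω | V ω ∈ B}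
        ≤ min (pr P {ω | Z ω = z} {ω | Y ω ∈ B ∧ D ω = d} / P.real A) 1
      ∧ pr P A {ω | V' ω ∈ B} = pr P {ω | D ω = d ∧ Z ω = z'} {ω | Y ω ∈ B}
      ∧ pr P C {ω | V ω ∈ B}
        = (pr P {ω | Z ω = z} {ω | Y ω ∈ B ∧ D ω = d} - P.real A * pr P A {ω | V ω ∈ B})
          / P.real C := by
  rw [h.pr_outcome_treatment hZ hz hB, hEd, h'.pr_outcome hZ hE' hz' hB]
  exact ⟨max_le_pr_of_union hA, pr_le_min_of_union hA, (pr_congr_left hEd').symm,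
    pr_right_of_disjoint_union hA hC hAC⟩

end IsRandomizedCell

section Types

variable {Ω : Type*} {D0 D1 : Ω → ℝ}

theorem setOf_eq_one_eq_typeA_union_typeC (hD0 : ∀ ω, D0 ω = 0 ∨ D0 ω = 1) :
    {ω | D1 ω = 1} = typeA D0 D1 ∪ typeC D0 D1 := by
  ext ω
  grind [typeA, typeC]

theorem setOf_eq_zero_eq_typeN_union_typeC (hD1 : ∀ ω, D1 ω = 0 ∨ D1 ω = 1) :
    {ω | D0 ω = 0} = typeN D0 D1 ∪ typeC D0 D1 := by
  ext ω
  grind [typeN, typeC]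

theorem disjoint_typeA_typeC : Disjoint (typeA D0 D1) (typeC D0 D1) :=
  Set.disjoint_left.2 fun _ hA hC ↦ one_ne_zero (hA.1.symm.trans hC.1)

theorem disjoint_typeN_typeC : Disjoint (typeN D0 D1) (typeC D0 D1) :=
  Set.disjoint_left.2 fun _ hN hC ↦ zero_ne_one (hN.2.symm.trans hC.2)

variable [MeasurableSpace Ω] {P : Measure Ω}

theorem measurableSet_typeA (hD0 : Measurable D0) (hD1 : Measurable D1) :
    MeasurableSet (typeA D0 D1) :=
  (hD0 (measurableSet_singleton 1)).inter (hD1 (measurableSet_singleton 1))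

theorem measurableSet_typeN (hD0 : Measurable D0) (hD1 : Measurable D1) :
    MeasurableSet (typeN D0 D1) :=
  (hD0 (measurableSet_singleton 0)).inter (hD1 (measurableSet_singleton 0))

theorem measurableSet_typeC (hD0 : Measurable D0) (hD1 : Measurable D1) :
    MeasurableSet (typeC D0 D1) :=
  (hD0 (measurableSet_singleton 0)).inter (hD1 (measurableSet_singleton 1))

theorem measure_typeDF_eq_zero (hmono : ∀ᵐ ω ∂P, D0 ω ≤ D1 ω) : P (typeDF D0 D1) = 0 := by
  rw [measure_eq_zero_iff_ae_notMem]
  filter_upwards [hmono] with ω hω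
  grind [typeDF]

theorem setOf_eq_one_ae_eq_typeA (hD1 : ∀ ω, D1 ω = 0 ∨ D1 ω = 1)
    (hmono : ∀ᵐ ω ∂P, D0 ω ≤ D1 ω) : {ω | D0 ω = 1} =ᵐ[P] typeA D0 D1 := by
  rw [Filter.eventuallyEq_set]
  filter_upwards [hmono] with ω hω
  grind [typeA]

theorem setOf_eq_zero_ae_eq_typeN (hD0 : ∀ ω, D0 ω = 0 ∨ D0 ω = 1)
    (hmono : ∀ᵐ ω ∂P, D0 ω ≤ D1 ω) : {ω | D1 ω = 0} =ᵐ[P] typeN D0 D1 := by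
  rw [Filter.eventuallyEq_set]
  filter_upwards [hmono] with ω hω
  grind [typeN]

end Types

theorem measure_setOf_eq_zero_ne_zero {Ω : Type*} [MeasurableSpace Ω] {P : Measure Ω}
    [IsProbabilityMeasure P] {Z : Ω → ℝ} (hZ : Measurable Z) (hZb : ∀ ω, Z ω = 0 ∨ Z ω = 1)
    (hlt : P {ω | Z ω = 1} < 1) : P {ω | Z ω = 0} ≠ 0 := by
  have hcompl : {ω | Z ω = 0} = {ω | Z ω = 1}ᶜ := by
    ext ω
    rcases hZb ω with hω | hω <;> simp [hω]
  have hmeas : MeasurableSet {ω | Z ω = 1} := hZ (measurableSet_singleton 1)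
  rw [hcompl, Ne, prob_compl_eq_zero_iff hmeas]
  exact hlt.ne

theorem distribution_bounds_ra_mon
    {Ω : Type*} [MeasurableSpace Ω] (P : Measure Ω) [IsProbabilityMeasure P]
    (Y11 Y10 Y01 Y00 D0 D1 Z D Y : Ω → ℝ)
    (hY11m : Measurable Y11) (hY10m : Measurable Y10)
    (hY01m : Measurable Y01) (hY00m : Measurable Y00)
    (hD0m : Measurable D0) (hD1m : Measurable D1) (hZm : Measurable Z)
    (hD0b : ∀ ω, D0 ω = 0 ∨ D0 ω = 1) (hD1b : ∀ ω, D1 ω = 0 ∨ D1 ω = 1)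
    (hZb : ∀ ω, Z ω = 0 ∨ Z ω = 1)
    (hZpos : 0 < P {ω | Z ω = 1}) (hZlt : P {ω | Z ω = 1} < 1)
    (hDdef : ∀ ω, D ω = D1 ω * Z ω + D0 ω * (1 - Z ω))
    (hYdef : ∀ ω, Y ω = (Y11 ω * Z ω + Y10 ω * (1 - Z ω)) * D ω
        + (Y01 ω * Z ω + Y00 ω * (1 - Z ω)) * (1 - D ω))
    (RA : IndepFun (fun ω => (Y11 ω, Y10 ω, Y01 ω, Y00 ω, D0 ω, D1 ω)) Z P)
    (MON : ∀ᵐ ω ∂P, D0 ω ≤ D1 ω)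
    (hfs : pr P {ω | Z ω = 1} {ω | D ω = 1} > pr P {ω | Z ω = 0} {ω | D ω = 1})
    (pa pn pc pdf : ℝ)
    (hpa : pa = (P (typeA D0 D1)).toReal) (hpn : pn = (P (typeN D0 D1)).toReal)
    (hpc : pc = (P (typeC D0 D1)).toReal) (hpdf : pdf = (P (typeDF D0 D1)).toReal) :
    pdf = 0
  ∧ pc = pr P {ω | Z ω = 1} {ω | D ω = 1} - pr P {ω | Z ω = 0} {ω | D ω = 1}
  ∧ 0 < pc
  ∧ pa = pr P {ω | Z ω = 0} {ω | D ω = 1}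
  ∧ pn = pr P {ω | Z ω = 1} {ω | D ω = 0}
  ∧ (0 < pa → ∀ y : ℝ,
      max ((pr P {ω | Z ω = 1} {ω | Y ω ≤ y ∧ D ω = 1} - pc) / pa) 0
        ≤ pr P (typeA D0 D1) {ω | Y11 ω ≤ y}
      ∧ pr P (typeA D0 D1) {ω | Y11 ω ≤ y}
        ≤ min (pr P {ω | Z ω = 1} {ω | Y ω ≤ y ∧ D ω = 1} / pa) 1
      ∧ pr P (typeA D0 D1) {ω | Y10 ω ≤ y}
        = pr P {ω | D ω = 1 ∧ Z ω = 0} {ω | Y ω ≤ y}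
      ∧ pr P (typeC D0 D1) {ω | Y11 ω ≤ y}
        = (pr P {ω | Z ω = 1} {ω | Y ω ≤ y ∧ D ω = 1}
            - pa * pr P (typeA D0 D1) {ω | Y11 ω ≤ y}) / pc)
  ∧ (0 < pn → ∀ y : ℝ,
      max ((pr P {ω | Z ω = 0} {ω | Y ω ≤ y ∧ D ω = 0} - pc) / pn) 0
        ≤ pr P (typeN D0 D1) {ω | Y00 ω ≤ y}
      ∧ pr P (typeN D0 D1) {ω | Y00 ω ≤ y}
        ≤ min (pr P {ω | Z ω = 0} {ω | Y ω ≤ y ∧ D ω = 0} / pn) 1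
      ∧ pr P (typeN D0 D1) {ω | Y01 ω ≤ y}
        = pr P {ω | D ω = 0 ∧ Z ω = 1} {ω | Y ω ≤ y}
      ∧ pr P (typeC D0 D1) {ω | Y00 ω ≤ y}
        = (pr P {ω | Z ω = 0} {ω | Y ω ≤ y ∧ D ω = 0}
            - pn * pr P (typeN D0 D1) {ω | Y00 ω ≤ y}) / pc) := by
  subst hpa hpn hpc hpdf
  have hZ1 : P {ω | Z ω = 1} ≠ 0 := hZpos.ne'
  have hZ0 : P {ω | Z ω = 0} ≠ 0 := measure_setOf_eq_zero_ne_zero hZm hZb hZlt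
  have cell11 : IsRandomizedCell P Z D Y 1 1 D1 Y11 :=
    ⟨RA.comp (φ := fun q ↦ (q.2.2.2.2.2, q.1)) (by fun_prop) measurable_id,
      by simp +contextual [hDdef], by simp +contextual [hYdef]⟩
  have cell01 : IsRandomizedCell P Z D Y 0 1 D0 Y10 :=
    ⟨RA.comp (φ := fun q ↦ (q.2.2.2.2.1, q.2.1)) (by fun_prop) measurable_id,
      by simp +contextual [hDdef], by simp +contextual [hYdef]⟩
  have cell10 : IsRandomizedCell P Z D Y 1 0 D1 Y01 :=
    ⟨RA.comp (φ := fun q ↦ (q.2.2.2.2.2, q.2.2.1)) (by fun_prop) measurable_id,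
      by simp +contextual [hDdef], by simp +contextual [hYdef]⟩
  have cell00 : IsRandomizedCell P Z D Y 0 0 D0 Y00 :=
    ⟨RA.comp (φ := fun q ↦ (q.2.2.2.2.1, q.2.2.2.1)) (by fun_prop) measurable_id,
      by simp +contextual [hDdef], by simp +contextual [hYdef]⟩
  have hA := setOf_eq_one_ae_eq_typeA hD1b MON
  have hN := setOf_eq_zero_ae_eq_typeN hD0b MON
  have hAC := setOf_eq_one_eq_typeA_union_typeC (D1 := D1) hD0b
  have hNC := setOf_eq_zero_eq_typeN_union_typeC (D0 := D0) hD1b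
  have hC := measurableSet_typeC hD0m hD1m
  have hpc := cell11.measureReal_eq_pr_treatment_sub cell01 hZm hZ1 hZ0 hC
    disjoint_typeA_typeC hAC hA
  exact ⟨by simp [measure_typeDF_eq_zero MON], hpc, (sub_pos.2 hfs).trans_eq hpc.symm,
    (cell01.pr_treatment_of_ae_eq hZm hZ0 hA).symm, (cell10.pr_treatment_of_ae_eq hZm hZ1 hN).symm,
    fun _ y ↦ cell11.stratum_bounds (B := Set.Iic y) cell01 hZm hD0m hZ1 hZ0
      (measurableSet_typeA hD0m hD1m) hC disjoint_typeA_typeC hAC hA measurableSet_Iic,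
    fun _ y ↦ cell00.stratum_bounds (B := Set.Iic y) cell10 hZm hD1m hZ0 hZ1
      (measurableSet_typeN hD0m hD1m) hC disjoint_typeN_typeC hNC hN measurableSet_Iic⟩
end
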